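/- (CSS propagation, two-step version) Let C1, C2 ≤ F_q^n be linear codes with C2^⊥ ≤ C1, k = dim C1 + dim C2 − n, and relative distances d1 = wgt(C1 \ C2^⊥) > 1 and d2 = wgt(C2 \ C1^⊥) > 1. Then there exist linear codes C1', C2' ≤ F_q^{n−2} with (C2')^⊥ ≤ C1', dim C1' + dim C2' − (n−2) = k, wgt(C1' \ (C2')^⊥) ≥ d1 − 1, and wgt(C2' \ (C1')^⊥) ≥ d2 − 1. -/

import Mathlib

/-!
The length drops by one twice. In one step at a coordinate `i`, `C1` is shortened and `C2` is
punctured. Since shortening and puncturing are dual operations, inclusion of the dual survives, the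
relative distance of `C1` does not decrease, and that of `C2` decreases by at most one.

Puncturing lowers `dim C2` by one exactly when the unit vector `e_i` lies in `C2`, and shortening
lowers `dim C1` by one exactly when `e_i` is not in the dual of `C1`. As the relative distance of
`C2` exceeds one, `e_i ∈ C2` holds if and only if `e_i ∈ dualCode C1`, so exactly one of the two
dimensions drops (`finrank_shortenAt_add_punctureAt`). The second step is the same with the codes
interchanged, which is legitimate because the codes equal their double duals.
-/

open Finset

variable {F : Type*} [Field F]

/-- Puncturing at coordinate `i`: delete coordinate `i` from every codeword. -/
def punctureAt {n : ℕ} (i : Fin (n + 1)) (C : Submodule F (Fin (n + 1) → F)) :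
    Submodule F (Fin n → F) :=
  Submodule.map (LinearMap.funLeft F F i.succAbove) C

/-- Shortening at coordinate `i`: keep codewords vanishing at `i`, delete coordinate `i`. -/
def shortenAt {n : ℕ} (i : Fin (n + 1)) (C : Submodule F (Fin (n + 1) → F)) :
    Submodule F (Fin n → F) :=
  Submodule.map (LinearMap.funLeft F F i.succAbove)
    (C ⊓ LinearMap.ker (LinearMap.proj i : (Fin (n + 1) → F) →ₗ[F] F))

/-- Euclidean dual code w.r.t. the standard bilinear form. -/
def dualCode {n : ℕ} (C : Submodule F (Fin n → F)) : Submodule F (Fin n → F) where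
  carrier := {v | ∀ c ∈ C, ∑ j, v j * c j = 0}
  add_mem' := by
    intro a b ha hb c hc
    simp only [Set.mem_setOf_eq] at *
    simp [Pi.add_apply, add_mul, Finset.sum_add_distrib, ha c hc, hb c hc]
  zero_mem' := by intro c hc; simp
  smul_mem' := by
    intro r a ha c hc
    simp only [Set.mem_setOf_eq, Pi.smul_apply, smul_eq_mul, mul_assoc, ← Finset.mul_sum] at *
    rw [ha c hc, mul_zero]

/-- A linear form vanishing on `C` is the pairing with some vector of the dual, which separates
`C` from any vector outside it. -/
theorem dualCode_dualCode_le {n : ℕ} (C : Submodule F (Fin n → F)) :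
    dualCode (dualCode C) ≤ C := by
  intro x hx
  by_contra hxC
  obtain ⟨f, hfx, hfC⟩ := Submodule.exists_le_ker_of_notMem hxC
  have hf : ∀ y : Fin n → F, f y = ∑ j, y j * f (Pi.single j 1) := by
    intro y
    rw [LinearMap.pi_apply_eq_sum_univ f y]
    refine Finset.sum_congr rfl fun j _ => ?_
    rw [smul_eq_mul]
    congr 2
    ext l
    simp [Pi.single_apply, eq_comm]
  refine hfx ((hf x).trans (hx _ fun c hc => ?_))
  have h0 : f c = 0 := hfC hc
  rw [hf c] at h0
  simpa only [mul_comm] using h0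

theorem dualCode_le_comm {n : ℕ} {C D : Submodule F (Fin n → F)} (h : dualCode D ≤ C) :
    dualCode C ≤ D := fun _ hv =>
  dualCode_dualCode_le D fun c hc => hv c (h hc)

theorem single_mem_dualCode {n : ℕ} (i : Fin n) {C : Submodule F (Fin n → F)} :
    (Pi.single i 1 : Fin n → F) ∈ dualCode C ↔ ∀ c ∈ C, c i = 0 := by
  change (∀ c ∈ C, ∑ j, (Pi.single i 1 : Fin n → F) j * c j = 0) ↔ _
  simp [Pi.single_apply]

theorem dualCode_punctureAt_le {n : ℕ} (i : Fin (n + 1)) (C : Submodule F (Fin (n + 1) → F)) :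
    dualCode (punctureAt i C) ≤ shortenAt i (dualCode C) := by
  intro v hv
  refine ⟨i.insertNth 0 v, ⟨fun c hc => ?_, by simp⟩, ?_⟩
  · rw [Fin.sum_univ_succAbove _ i]
    simpa using hv _ (Submodule.mem_map_of_mem hc)
  · ext j
    simp [LinearMap.funLeft_apply]

theorem shortenAt_dualCode_le {n : ℕ} (i : Fin (n + 1)) (C : Submodule F (Fin (n + 1) → F)) :
    shortenAt i (dualCode C) ≤ dualCode (punctureAt i C) := by
  rintro _ ⟨w, ⟨hw, hwi⟩, rfl⟩ _ ⟨c, hc, rfl⟩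
  have h := hw c hc
  have hwi' : w i = 0 := hwi
  rw [Fin.sum_univ_succAbove _ i, hwi', zero_mul, zero_add] at h
  exact h

theorem punctureAt_dualCode_le {n : ℕ} (i : Fin (n + 1)) (C : Submodule F (Fin (n + 1) → F)) :
    punctureAt i (dualCode C) ≤ dualCode (shortenAt i C) := by
  rintro _ ⟨w, hw, rfl⟩ _ ⟨c, ⟨hc, hci⟩, rfl⟩
  have h := hw c hc
  have hci' : c i = 0 := hci
  rw [Fin.sum_univ_succAbove _ i, hci', mul_zero, zero_add] at h
  exact h

theorem hammingNorm_succAbove [DecidableEq F] {n : ℕ} (i : Fin (n + 1)) (w : Fin (n + 1) → F) :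
    hammingNorm w = (if w i ≠ 0 then 1 else 0) +
      hammingNorm (LinearMap.funLeft F F i.succAbove w) := by
  rw [hammingNorm, hammingNorm, Finset.card_filter, Finset.card_filter,
    Fin.sum_univ_succAbove _ i]
  rfl

theorem finrank_map_add_finrank_inf_ker {V W : Type*} [AddCommGroup V] [Module F V]
    [FiniteDimensional F V] [AddCommGroup W] [Module F W] (f : V →ₗ[F] W) (p : Submodule F V) :
    Module.finrank F (p.map f) + Module.finrank F ↥(p ⊓ LinearMap.ker f) =
      Module.finrank F p := by
  have h := LinearMap.finrank_range_add_finrank_ker (f.domRestrict p)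
  rw [LinearMap.range_domRestrict, LinearMap.ker_domRestrict] at h
  rw [← h, ← Submodule.map_comap_subtype, Submodule.finrank_map_subtype_eq]

theorem ker_funLeft_succAbove {n : ℕ} (i : Fin (n + 1)) :
    LinearMap.ker (LinearMap.funLeft F F i.succAbove) =
      Submodule.span F {(Pi.single i 1 : Fin (n + 1) → F)} := by
  ext w
  rw [Submodule.mem_span_singleton, LinearMap.mem_ker]
  constructor
  · intro h
    refine ⟨w i, funext fun j => ?_⟩
    rcases Fin.eq_self_or_eq_succAbove i j with rfl | ⟨l, rfl⟩
    · simp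
    · simpa using (congrFun h l).symm
  · rintro ⟨a, rfl⟩
    ext l
    simp [LinearMap.funLeft_apply]

theorem finrank_shortenAt {n : ℕ} (i : Fin (n + 1)) (C : Submodule F (Fin (n + 1) → F)) :
    Module.finrank F (shortenAt i C) = Module.finrank F
      ↥(C ⊓ LinearMap.ker (LinearMap.proj i : (Fin (n + 1) → F) →ₗ[F] F)) := by
  rw [← finrank_map_add_finrank_inf_ker (LinearMap.funLeft F F i.succAbove)
    (C ⊓ LinearMap.ker (LinearMap.proj i : (Fin (n + 1) → F) →ₗ[F] F))]
  have h : C ⊓ LinearMap.ker (LinearMap.proj i : (Fin (n + 1) → F) →ₗ[F] F) ⊓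
      LinearMap.ker (LinearMap.funLeft F F i.succAbove) = ⊥ := by
    rw [eq_bot_iff]
    rintro w ⟨⟨-, hwi⟩, hw⟩
    refine funext fun j => ?_
    rcases Fin.eq_self_or_eq_succAbove i j with rfl | ⟨l, rfl⟩
    · exact hwi
    · exact congrFun hw l
  rw [h, finrank_bot, add_zero]
  rfl

/-- Puncturing lowers `dim C2` when `e_i ∈ C2`, and shortening lowers `dim C1` when some word of
`C1` is nonzero at `i`; under the hypothesis exactly one of these happens. -/
theorem finrank_shortenAt_add_punctureAt {n : ℕ} (i : Fin (n + 1))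
    {C1 C2 : Submodule F (Fin (n + 1) → F)}
    (h : (Pi.single i 1 : Fin (n + 1) → F) ∈ C2 ↔ ∀ c ∈ C1, c i = 0) :
    Module.finrank F (shortenAt i C1) + Module.finrank F (punctureAt i C2) + 1 =
      Module.finrank F C1 + Module.finrank F C2 := by
  have hp := finrank_map_add_finrank_inf_ker (LinearMap.funLeft F F i.succAbove) C2
  have hs := finrank_map_add_finrank_inf_ker
    (LinearMap.proj i : (Fin (n + 1) → F) →ₗ[F] F) C1
  rw [← finrank_shortenAt] at hs
  rw [ker_funLeft_succAbove] at hp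
  change Module.finrank F (punctureAt i C2) + _ = _ at hp
  by_cases hi : ∀ c ∈ C1, c i = 0
  · have h1 : C2 ⊓ Submodule.span F {(Pi.single i 1 : Fin (n + 1) → F)} =
        Submodule.span F {(Pi.single i 1 : Fin (n + 1) → F)} := by
      rw [inf_eq_right, Submodule.span_singleton_le_iff_mem]
      exact h.2 hi
    have h2 : C1.map (LinearMap.proj i : (Fin (n + 1) → F) →ₗ[F] F) = ⊥ := by
      rw [eq_bot_iff]
      rintro _ ⟨c, hc, rfl⟩
      exact hi c hc
    rw [h1, finrank_span_singleton (by simp)] at hp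
    rw [h2, finrank_bot] at hs
    omega
  · have h1 : C2 ⊓ Submodule.span F {(Pi.single i 1 : Fin (n + 1) → F)} = ⊥ := by
      rw [← disjoint_iff, Submodule.disjoint_span_singleton' (by simp)]
      exact fun hm => hi (h.1 hm)
    have h2 : C1.map (LinearMap.proj i : (Fin (n + 1) → F) →ₗ[F] F) = ⊤ := by
      push Not at hi
      obtain ⟨c, hc, hci⟩ := hi
      refine eq_top_iff.2 fun a _ => ⟨(a / c i) • c, C1.smul_mem _ hc, ?_⟩
      simp [hci]
    rw [h1, finrank_bot] at hp
    rw [h2, finrank_top, Module.finrank_self] at hs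
    omega

/-- Shortening `C1` and puncturing `C2` at one coordinate: length drops by one, the dimension of
the CSS pair is preserved, and only the second relative distance may drop, by at most one. -/
theorem css_one_step [DecidableEq F] {n d1 d2 : ℕ} (i : Fin (n + 1)) {C1 C2 : Submodule F (Fin (n + 1) → F)}
    (hcss : dualCode C2 ≤ C1)
    (hd1 : ∀ v ∈ C1, v ∉ dualCode C2 → d1 ≤ hammingNorm v)
    (hd2 : ∀ v ∈ C2, v ∉ dualCode C1 → d2 ≤ hammingNorm v) (hd2' : 1 < d2) :
    ∃ C1' C2' : Submodule F (Fin n → F),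
      dualCode C2' ≤ C1' ∧
      Module.finrank F C1' + Module.finrank F C2' + 1 =
        Module.finrank F C1 + Module.finrank F C2 ∧
      (∀ v ∈ C1', v ∉ dualCode C2' → d1 ≤ hammingNorm v) ∧
      (∀ v ∈ C2', v ∉ dualCode C1' → d2 - 1 ≤ hammingNorm v) := by
  refine ⟨shortenAt i C1, punctureAt i C2,
    (dualCode_punctureAt_le i C2).trans (Submodule.map_mono (inf_le_inf_right _ hcss)),
    finrank_shortenAt_add_punctureAt i ⟨fun h => ?_, fun h => ?_⟩, ?_, ?_⟩
  -- `e_i` has weight one, so it cannot lie in `C2` outside the dual of `C1`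
  · rw [← single_mem_dualCode]
    by_contra hn
    have hw := hd2 _ h hn
    have h1 : hammingNorm (Pi.single i 1 : Fin (n + 1) → F) = 1 := by
      simp [hammingNorm, Pi.single_apply, Finset.filter_eq']
    omega
  · exact dualCode_le_comm hcss ((single_mem_dualCode i).2 h)
  · rintro _ ⟨w, ⟨hw, hwi⟩, rfl⟩ hv
    have hwi' : w i = 0 := hwi
    have h := hd1 w hw fun hw' => hv (shortenAt_dualCode_le i C2 ⟨w, ⟨hw', hwi⟩, rfl⟩)
    rw [hammingNorm_succAbove i w] at h
    simpa [hwi'] using h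
  · rintro _ ⟨w, hw, rfl⟩ hv
    have h := hd2 w hw fun hw' => hv (punctureAt_dualCode_le i C1 ⟨w, hw', rfl⟩)
    rw [hammingNorm_succAbove i w] at h
    split_ifs at h <;> omega

variable [Fintype F] [DecidableEq F]

/-- Theorem 2, classically: from a CSS pair on `F_q^n` with relative
distances `d1, d2 > 1`, there is a CSS pair on `F_q^{n-2}` with the same CSS dimension
and relative distances at least `d1 - 1` and `d2 - 1`. -/
theorem css_two_step {n k d1 d2 : ℕ} (C1 C2 : Submodule F (Fin (n + 2) → F))
    (hcss : dualCode C2 ≤ C1)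
    (hk : Module.finrank F ↥C1 + Module.finrank F ↥C2 - (n + 2) = k)
    (hd1 : IsLeast (hammingNorm '' {v | v ∈ C1 ∧ v ∉ dualCode C2}) d1)
    (hd2 : IsLeast (hammingNorm '' {v | v ∈ C2 ∧ v ∉ dualCode C1}) d2)
    (hd1' : 1 < d1) (hd2' : 1 < d2) :
    ∃ C1' C2' : Submodule F (Fin n → F),
      dualCode C2' ≤ C1' ∧
      Module.finrank F ↥C1' + Module.finrank F ↥C2' - n = k ∧
      (∀ v ∈ C1', v ∉ dualCode C2' → d1 - 1 ≤ hammingNorm v) ∧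
      (∀ v ∈ C2', v ∉ dualCode C1' → d2 - 1 ≤ hammingNorm v) := by
  obtain ⟨A1, A2, hA, hAk, hA1, hA2⟩ := css_one_step 0 hcss
    (fun v hv hv' => hd1.2 ⟨v, ⟨hv, hv'⟩, rfl⟩) (fun v hv hv' => hd2.2 ⟨v, ⟨hv, hv'⟩, rfl⟩) hd2'
  obtain ⟨B2, B1, hB, hBk, hB2, hB1⟩ := css_one_step 0 (dualCode_le_comm hA) hA2 hA1 (by omega)
  -- `Fin (n + 1 + 1)` is restated as `Fin (n + 2)`, so that the dimensions match those in `hk`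
  have hCk : Module.finrank F A1 + Module.finrank F A2 + 1 =
    Module.finrank F C1 + Module.finrank F C2 := hAk
  exact ⟨B1, B2, dualCode_le_comm hB, by omega, hB1, hB2⟩
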